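/- Suppose that n is even, that J is ferromagnetic, and that the subgraph G_{>0} is connected. Let x_1, …, x_{n/2} : [0,∞) → ℝ be continuous functions such that for every t ≥ 0 one has 0 < x_1(t) < … < x_{n/2}(t) < π/2 and {x ∈ (0,π/2) : Z_{G,t}(x) = 0} = {x_1(t), …, x_{n/2}(t)}. Set y_k(t) := sin²x_k(t). Then each y_k is differentiable on (0,∞) and for every t > 0, y_k′(t) = −(1/sinh(t)) · y_k(t)/(⟨σ_{u₀}σ_{v₀}⟩_J · sinh(t) + cosh(t)) · ∏_{j=1}^{n/2} (y_j(0) − y_k(t))/y_j(0) · ∏_{j=1, j≠k}^{n/2} y_j(t)/(y_j(t) − y_k(t)). -/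

import Mathlib

open scoped Real

noncomputable def spin (b : Bool) : ℝ := if b then 1 else -1

noncomputable def pairProd {V : Type} (σ : V → Bool) (e : Sym2 V) : ℝ :=
  Sym2.lift ⟨fun u v => spin (σ u) * spin (σ v), fun _ _ => mul_comm _ _⟩ e

/-- The Ising partition function `Z_{G,t}(x)` with an extra coupling `t` at the edge
`u₀v₀`, couplings `J` on the edge set `E`, and (complex) external field `i·x`. -/
noncomputable def IsingZ {V : Type} [Fintype V] [DecidableEq V]
    (E : Finset (Sym2 V)) (J : Sym2 V → ℝ) (u₀ v₀ : V) (t x : ℂ) : ℂ :=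
  ∑ σ : V → Bool, Complex.exp
    (t * ((spin (σ u₀) * spin (σ v₀) : ℝ) : ℂ)
      + ((∑ e ∈ E, J e * pairProd σ e : ℝ) : ℂ)
      + Complex.I * x * ((∑ u, spin (σ u) : ℝ) : ℂ))

/-- The two-point correlation `⟨σ_{u₀}σ_{v₀}⟩_J`. -/
noncomputable def corr {V : Type} [Fintype V] [DecidableEq V]
    (E : Finset (Sym2 V)) (J : Sym2 V → ℝ) (u₀ v₀ : V) : ℝ :=
  (∑ σ : V → Bool,
      spin (σ u₀) * spin (σ v₀) * Real.exp (∑ e ∈ E, J e * pairProd σ e))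
    / ∑ σ : V → Bool, Real.exp (∑ e ∈ E, J e * pairProd σ e)

open Polynomial in
/-- A real polynomial of degree at most `#s`, not vanishing at `0` and with distinct nonzero
roots `r j`, `j ∈ s`, is its constant term times `∏ (1 - X / r j)`. -/
lemma eval_eq_mul_prod_of_roots {ι : Type*} (s : Finset ι) (r : ι → ℝ) (Q : ℝ[X])
    (hdeg : Q.natDegree ≤ s.card) (hr0 : ∀ j ∈ s, r j ≠ 0) (hinj : Set.InjOn r s)
    (hroot : ∀ j ∈ s, Q.eval (r j) = 0) (y : ℝ) :
    Q.eval y = Q.eval 0 * ∏ j ∈ s, (1 - y / r j) := by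
  classical
  set D : ℝ[X] := Q - C (Q.eval 0) * ∏ j ∈ s, (1 - C (r j)⁻¹ * X) with hD
  have hev (z : ℝ) : D.eval z = Q.eval z - Q.eval 0 * ∏ j ∈ s, (1 - z / r j) := by
    simp [hD, eval_prod, div_eq_inv_mul]
  suffices h : D = 0 by
    have := hev y
    rw [h, eval_zero] at this
    linarith
  have hcard : (insert 0 (s.image r)).card = s.card + 1 := by
    rw [Finset.card_insert_of_notMem, Finset.card_image_of_injOn hinj]
    simpa using hr0
  refine eq_zero_of_natDegree_lt_card_of_eval_eq_zero' D (insert 0 (s.image r)) ?_ ?_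
  · simp only [Finset.mem_insert, Finset.mem_image]
    rintro z (rfl | ⟨j, hj, rfl⟩)
    · simp [hev]
    · rw [hev, hroot j hj, Finset.prod_eq_zero hj (by simp [hr0 j hj])]
      simp
  · rw [hcard, Nat.lt_succ_iff]
    refine (natDegree_sub_le _ _).trans (max_le hdeg ((natDegree_C_mul_le _ _).trans ?_))
    refine (natDegree_prod_le _ _).trans ?_
    refine (Finset.sum_le_card_nsmul _ _ 1 fun j _ => ?_).trans (by simp)
    compute_degree

/-- If `f` vanishes at `t` and is differentiable there, and `g` is merely continuous at `t`,
then `f * g` is differentiable at `t`. -/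
lemma HasDerivAt.mul_continuousAt_of_eq_zero {f g : ℝ → ℝ} {f' t : ℝ} (hf : HasDerivAt f f' t)
    (hg : ContinuousAt g t) (hft : f t = 0) :
    HasDerivAt (fun u => f u * g u) (f' * g t) t := by
  rw [hasDerivAt_iff_tendsto_slope] at hf ⊢
  refine (hf.mul (hg.mono_left nhdsWithin_le_nhds)).congr fun u => ?_
  simp only [slope_def_field, hft]
  ring

lemma spin_not (b : Bool) : spin (!b) = -spin b := by
  cases b <;> simp [spin]

lemma pairProd_not {V : Type} (σ : V → Bool) (e : Sym2 V) :
    pairProd (fun v => !σ v) e = pairProd σ e := by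
  induction e with
  | _ u v => simp [pairProd, spin_not]

lemma spin_mul_spin_eq (a b : Bool) : spin a * spin b = 1 ∨ spin a * spin b = -1 := by
  cases a <;> cases b <;> simp [spin]

lemma sum_spin {V : Type} [Fintype V] (σ : V → Bool) :
    ∑ u, spin (σ u) =
      2 * ((Finset.univ.filter fun u => σ u = true).card : ℝ) - Fintype.card V := by
  have h (u : V) : spin (σ u) = 2 * (if σ u = true then 1 else 0) - 1 := by
    cases σ u <;> norm_num [spin]
  simp only [h, Finset.sum_sub_distrib, ← Finset.mul_sum, Finset.sum_boole]
  simp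

/-- The Ising partition function in the real form obtained from the spin-flip symmetry. -/
noncomputable def realIsingZ {V : Type} [Fintype V] [DecidableEq V]
    (E : Finset (Sym2 V)) (J : Sym2 V → ℝ) (u₀ v₀ : V) (t z : ℝ) : ℝ :=
  ∑ σ : V → Bool, Real.exp (t * (spin (σ u₀) * spin (σ v₀)) + ∑ e ∈ E, J e * pairProd σ e)
    * Real.cos (z * ∑ u, spin (σ u))

section

variable {V : Type} [Fintype V] [DecidableEq V]
  (E : Finset (Sym2 V)) (J : Sym2 V → ℝ) (u₀ v₀ : V)

lemma IsingZ_eq_realIsingZ (t z : ℝ) :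
    IsingZ E J u₀ v₀ t z = realIsingZ E J u₀ v₀ t z := by
  set w : (V → Bool) → ℝ := fun σ =>
    Real.exp (t * (spin (σ u₀) * spin (σ v₀)) + ∑ e ∈ E, J e * pairProd σ e) with hw
  set M : (V → Bool) → ℝ := fun σ => ∑ u, spin (σ u) with hM
  have h1 : IsingZ E J u₀ v₀ t z
      = ∑ σ, (w σ : ℂ) * Complex.exp (((z * M σ : ℝ) : ℂ) * Complex.I) := by
    refine Finset.sum_congr rfl fun σ _ => ?_
    simp only [hw, hM, Complex.ofReal_exp, ← Complex.exp_add]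
    congr 1
    push_cast
    ring
  have h2 : IsingZ E J u₀ v₀ t z
      = ∑ σ, (w σ : ℂ) * Complex.exp (-((z * M σ : ℝ) : ℂ) * Complex.I) := by
    rw [h1]
    refine Fintype.sum_equiv (Equiv.arrowCongr (Equiv.refl V) Equiv.boolNot) _ _ fun σ => ?_
    have hσ : (Equiv.arrowCongr (Equiv.refl V) Equiv.boolNot) σ = fun v => !σ v := by
      ext v; simp
    rw [hσ]
    simp [hw, hM, pairProd_not, spin_not]
  have h3 : (realIsingZ E J u₀ v₀ t z : ℂ) = ∑ σ, (w σ : ℂ) * Complex.cos ((z * M σ : ℝ) : ℂ) := by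
    simp only [realIsingZ, hw, hM, Complex.ofReal_sum, Complex.ofReal_mul, Complex.ofReal_cos]
  have h4 : 2 * IsingZ E J u₀ v₀ t z = 2 * (realIsingZ E J u₀ v₀ t z : ℂ) := by
    rw [two_mul]
    nth_rewrite 1 [h1]
    rw [h2, h3, ← Finset.sum_add_distrib, Finset.mul_sum]
    refine Finset.sum_congr rfl fun σ _ => ?_
    rw [← mul_add, ← Complex.two_cos]
    ring
  exact mul_left_cancel₀ two_ne_zero h4

lemma realIsingZ_zero_pos (t : ℝ) : 0 < realIsingZ E J u₀ v₀ t 0 := by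
  simp only [realIsingZ, zero_mul, Real.cos_zero, mul_one]
  exact Finset.sum_pos (fun _ _ => Real.exp_pos _) Finset.univ_nonempty

/-- The derivative of the partition function with respect to the coupling at `t = 0`. -/
noncomputable def realIsingZDeriv (z : ℝ) : ℝ :=
  ∑ σ : V → Bool, spin (σ u₀) * spin (σ v₀) * Real.exp (∑ e ∈ E, J e * pairProd σ e)
    * Real.cos (z * ∑ u, spin (σ u))

lemma realIsingZ_eq (t z : ℝ) :
    realIsingZ E J u₀ v₀ t z = Real.cosh t * realIsingZ E J u₀ v₀ 0 z
      + Real.sinh t * realIsingZDeriv E J u₀ v₀ z := by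
  simp only [realIsingZ, realIsingZDeriv, Finset.mul_sum, ← Finset.sum_add_distrib]
  refine Finset.sum_congr rfl fun σ _ => ?_
  rw [Real.exp_add, zero_mul, zero_add]
  rcases spin_mul_spin_eq (σ u₀) (σ v₀) with h | h
  · rw [h, mul_one, ← Real.cosh_add_sinh]
    ring
  · rw [h, mul_neg_one, ← Real.cosh_sub_sinh]
    ring

lemma realIsingZDeriv_zero :
    realIsingZDeriv E J u₀ v₀ 0 = corr E J u₀ v₀ * realIsingZ E J u₀ v₀ 0 0 := by
  have h := (realIsingZ_zero_pos E J u₀ v₀ 0).ne'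
  simp only [realIsingZ, zero_mul, Real.cos_zero, mul_one, zero_add] at h
  simp only [realIsingZ, realIsingZDeriv, corr, zero_mul, Real.cos_zero, mul_one, zero_add]
  rw [div_mul_cancel₀ _ h]

open Polynomial in
lemma exists_polynomial_cos_two_mul (m : ℤ) :
    ∃ Q : ℝ[X], Q.natDegree ≤ m.natAbs ∧
      ∀ z : ℝ, Q.eval (Real.sin z ^ 2) = Real.cos (z * (2 * m)) := by
  refine ⟨(Chebyshev.T ℝ m).comp (1 - C 2 * X), ?_, fun z => ?_⟩
  · refine natDegree_comp_le.trans ?_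
    rw [Chebyshev.natDegree_T]
    have h1 : (1 - C 2 * X : ℝ[X]).natDegree ≤ 1 := by compute_degree
    exact (Nat.mul_le_mul_left _ h1).trans (by simp)
  · have h2 : 1 - 2 * Real.sin z ^ 2 = Real.cos (2 * z) := by
      rw [Real.cos_two_mul, Real.sin_sq]; ring
    simp only [eval_comp, eval_sub, eval_one, eval_mul, eval_C, eval_X, h2,
      Chebyshev.T_real_cos]
    ring_nf

open Polynomial in
lemma exists_polynomial_realIsingZ (heven : Even (Fintype.card V)) (t : ℝ) :
    ∃ Q : ℝ[X], Q.natDegree ≤ Fintype.card V / 2 ∧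
      ∀ z : ℝ, Q.eval (Real.sin z ^ 2) = realIsingZ E J u₀ v₀ t z := by
  obtain ⟨N, hN⟩ := heven
  have hσ (σ : V → Bool) : ∃ Q : ℝ[X], Q.natDegree ≤ Fintype.card V / 2 ∧
      ∀ z : ℝ, Q.eval (Real.sin z ^ 2) = Real.cos (z * ∑ u, spin (σ u)) := by
    set c := (Finset.univ.filter fun u => σ u = true).card with hc
    have hcle : c ≤ Fintype.card V := Finset.card_le_univ _
    obtain ⟨Q, hQ, hQe⟩ := exists_polynomial_cos_two_mul ((c : ℤ) - N)
    refine ⟨Q, hQ.trans (by omega), fun z => ?_⟩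
    rw [hQe, sum_spin, ← hc, hN]
    congr 1
    push_cast
    ring
  choose Q hQ hQe using hσ
  refine ⟨∑ σ, C (Real.exp (t * (spin (σ u₀) * spin (σ v₀)) + ∑ e ∈ E, J e * pairProd σ e)) * Q σ,
    ?_, fun z => ?_⟩
  · exact natDegree_sum_le_of_forall_le _ _ fun σ _ => (natDegree_C_mul_le _ _).trans (hQ σ)
  · simp [eval_finsetSum, hQe, realIsingZ]

/-- Factorization of the partition function over its zeros in the variable `sin² z`. -/
lemma realIsingZ_eq_mul_prod (heven : Even (Fintype.card V)) (t : ℝ) {ι : Type*} (s : Finset ι)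
    (hs : s.card = Fintype.card V / 2) (r : ι → ℝ) (hr : ∀ j ∈ s, r j ∈ Set.Ioo 0 (π / 2))
    (hinj : Set.InjOn (fun j => Real.sin (r j) ^ 2) s)
    (hroot : ∀ j ∈ s, realIsingZ E J u₀ v₀ t (r j) = 0) (z : ℝ) :
    realIsingZ E J u₀ v₀ t z =
      realIsingZ E J u₀ v₀ t 0 * ∏ j ∈ s, (1 - Real.sin z ^ 2 / Real.sin (r j) ^ 2) := by
  obtain ⟨Q, hQ, hQe⟩ := exists_polynomial_realIsingZ E J u₀ v₀ heven t
  have h0 : Q.eval 0 = realIsingZ E J u₀ v₀ t 0 := by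
    simpa using hQe 0
  rw [← h0, ← hQe]
  refine eval_eq_mul_prod_of_roots s (fun j => Real.sin (r j) ^ 2) Q (hs ▸ hQ) (fun j hj => ?_)
    hinj (fun j hj => by rw [hQe, hroot j hj]) _
  have := hr j hj
  exact pow_ne_zero _ (Real.sin_pos_of_pos_of_lt_pi this.1 (by linarith [this.2, Real.pi_pos])).ne'

end

theorem stmt10 {V : Type} [Fintype V] [DecidableEq V]
    (E : Finset (Sym2 V)) (J : Sym2 V → ℝ) (u₀ v₀ : V)
    (hE : s(u₀, v₀) ∈ E)
    (hferro : ∀ e ∈ E, 0 ≤ J e)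
    (hconn : (SimpleGraph.fromEdgeSet {e : Sym2 V | e ∈ E ∧ 0 < J e}).Connected)
    (n : ℕ) (hn : n = Fintype.card V) (heven : Even n)
    (x : ℕ → ℝ → ℝ)
    (hcont : ∀ k ∈ Finset.Icc 1 (n / 2), ContinuousOn (x k) (Set.Ici 0))
    (hzeros : ∀ t : ℝ, 0 ≤ t →
      (∀ k ∈ Finset.Icc 1 (n / 2), 0 < x k t ∧ x k t < π / 2) ∧
      (∀ k, 1 ≤ k → k < n / 2 → x k t < x (k + 1) t) ∧
      {z : ℝ | z ∈ Set.Ioo 0 (π / 2) ∧ IsingZ E J u₀ v₀ t z = 0}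
        = (fun k => x k t) '' Set.Icc 1 (n / 2)) :
    ∀ k ∈ Finset.Icc 1 (n / 2), ∀ t : ℝ, 0 < t →
      HasDerivAt (fun u => Real.sin (x k u) ^ 2)
        (-(1 / Real.sinh t) *
            (Real.sin (x k t) ^ 2
              / (corr E J u₀ v₀ * Real.sinh t + Real.cosh t)) *
            (∏ j ∈ Finset.Icc 1 (n / 2),
              (Real.sin (x j 0) ^ 2 - Real.sin (x k t) ^ 2)
                / Real.sin (x j 0) ^ 2) *
            ∏ j ∈ (Finset.Icc 1 (n / 2)).erase k,
              Real.sin (x j t) ^ 2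
                / (Real.sin (x j t) ^ 2 - Real.sin (x k t) ^ 2)) t := by
  subst hn
  intro k hk t ht
  set s := Finset.Icc 1 (Fintype.card V / 2) with hs
  have hmem {u : ℝ} (hu : 0 ≤ u) {j : ℕ} (hj : j ∈ s) : x j u ∈ Set.Ioo 0 (π / 2) :=
    (hzeros u hu).1 j hj
  have hsin {u : ℝ} (hu : 0 ≤ u) {j : ℕ} (hj : j ∈ s) : 0 < Real.sin (x j u) :=
    Real.sin_pos_of_pos_of_lt_pi (hmem hu hj).1 (by linarith [(hmem hu hj).2, Real.pi_pos])
  have hsq {u : ℝ} (hu : 0 ≤ u) {j : ℕ} (hj : j ∈ s) : Real.sin (x j u) ^ 2 ≠ 0 :=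
    (pow_pos (hsin hu hj) 2).ne'
  have hmono {u : ℝ} (hu : 0 ≤ u) : StrictMonoOn (fun j => x j u) s := by
    refine strictMonoOn_of_lt_succ (by rw [hs, Finset.coe_Icc]; exact Set.ordConnected_Icc)
      fun j _ hj hj' => ?_
    simp only [hs, Finset.coe_Icc, Set.mem_Icc, Order.succ_eq_add_one] at hj hj' ⊢
    exact (hzeros u hu).2.1 j hj.1 (by omega)
  have hinj {u : ℝ} (hu : 0 ≤ u) : Set.InjOn (fun j => Real.sin (x j u) ^ 2) s := by
    intro i hi j hj hij
    have h1 : Real.sin (x i u) = Real.sin (x j u) :=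
      (pow_left_inj₀ (hsin hu hi).le (hsin hu hj).le two_ne_zero).1 hij
    refine (hmono hu).injOn hi hj (Real.injOn_sin ?_ ?_ h1)
    · exact ⟨by linarith [(hmem hu hi).1, Real.pi_pos], (hmem hu hi).2.le⟩
    · exact ⟨by linarith [(hmem hu hj).1, Real.pi_pos], (hmem hu hj).2.le⟩
  have hroot {u : ℝ} (hu : 0 ≤ u) {j : ℕ} (hj : j ∈ s) :
      realIsingZ E J u₀ v₀ u (x j u) = 0 := by
    have h : x j u ∈ {z : ℝ | z ∈ Set.Ioo 0 (π / 2) ∧ IsingZ E J u₀ v₀ u z = 0} := by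
      rw [(hzeros u hu).2.2]
      exact ⟨j, by simpa [hs] using hj, rfl⟩
    have h2 := h.2
    rw [IsingZ_eq_realIsingZ] at h2
    exact_mod_cast h2
  have hfac {u : ℝ} (hu : 0 ≤ u) (z : ℝ) := realIsingZ_eq_mul_prod E J u₀ v₀ heven u s
    (by simp [hs]) (fun j => x j u) (fun j hj => hmem hu hj) (hinj hu) (fun j hj => hroot hu hj) z
  have hcontAt {j : ℕ} (hj : j ∈ s) : ContinuousAt (fun u => Real.sin (x j u) ^ 2) t :=
    (Real.continuous_sin.continuousAt.comp
      ((hcont j hj).continuousAt (Ici_mem_nhds ht))).pow 2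
  set Y := Real.sin (x k t) ^ 2 with hY
  -- `y k u - Y = Z u (x k t) * g u`, where `g` is continuous at `t`
  set P : ℝ → ℝ := fun u => ∏ j ∈ s.erase k, (1 - Y / Real.sin (x j u) ^ 2) with hP
  set g : ℝ → ℝ := fun u => Real.sin (x k u) ^ 2 / (realIsingZ E J u₀ v₀ u 0 * P u) with hg
  have hPcont : ContinuousAt P t :=
    tendsto_finsetProd _ fun j hj => tendsto_const_nhds.sub
      (tendsto_const_nhds.div (hcontAt (Finset.mem_of_mem_erase hj))
        (hsq ht.le (Finset.mem_of_mem_erase hj)))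
  have hPt : P t ≠ 0 := by
    refine Finset.prod_ne_zero_iff.2 fun j hj h => ?_
    obtain ⟨hjk, hj⟩ := Finset.mem_erase.1 hj
    have h1 : Y / Real.sin (x j t) ^ 2 = 1 := by linarith
    rw [div_eq_one_iff_eq (hsq ht.le hj)] at h1
    exact hjk (hinj ht.le hj hk h1.symm)
  have hZderiv (z : ℝ) : HasDerivAt (fun u => realIsingZ E J u₀ v₀ u z)
      (Real.sinh t * realIsingZ E J u₀ v₀ 0 z + Real.cosh t * realIsingZDeriv E J u₀ v₀ z) t := by
    rw [funext fun u => realIsingZ_eq E J u₀ v₀ u z]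
    exact ((Real.hasDerivAt_cosh t).mul_const (realIsingZ E J u₀ v₀ 0 z)).add
      ((Real.hasDerivAt_sinh t).mul_const (realIsingZDeriv E J u₀ v₀ z))
  have hgcont : ContinuousAt g t :=
    (hcontAt hk).div ((hZderiv 0).continuousAt.mul hPcont)
      (mul_ne_zero (realIsingZ_zero_pos E J u₀ v₀ t).ne' hPt)
  have hy : (fun u => Real.sin (x k u) ^ 2) =ᶠ[nhds t]
      fun u => Y + realIsingZ E J u₀ v₀ u (x k t) * g u := by
    filter_upwards [Ici_mem_nhds ht, hPcont.eventually_ne hPt] with u hu hPu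
    rw [hfac hu (x k t), ← Finset.mul_prod_erase s _ hk]
    have h1 := (hsin hu hk).ne'
    have h2 := (realIsingZ_zero_pos E J u₀ v₀ u).ne'
    change _ = Y + realIsingZ E J u₀ v₀ u 0 * ((1 - Y / Real.sin (x k u) ^ 2) * P u)
      * (Real.sin (x k u) ^ 2 / (realIsingZ E J u₀ v₀ u 0 * P u))
    field_simp
    ring
  have hmain := (((hZderiv (x k t)).mul_continuousAt_of_eq_zero hgcont
    (hroot ht.le hk)).const_add Y).congr_of_eventuallyEq hy
  refine hmain.congr_deriv ?_
  have hsinh : Real.sinh t ≠ 0 := (Real.sinh_pos_iff.2 ht).ne'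
  have hdt : Real.sinh t * realIsingZ E J u₀ v₀ 0 (x k t)
      + Real.cosh t * realIsingZDeriv E J u₀ v₀ (x k t)
      = -(1 / Real.sinh t) * realIsingZ E J u₀ v₀ 0 (x k t) := by
    have h1 := hroot ht.le hk
    rw [realIsingZ_eq] at h1
    have h2 := Real.cosh_sq t
    field_simp
    linear_combination Real.cosh t * h1 - realIsingZ E J u₀ v₀ 0 (x k t) * h2
  have hprod0 : ∏ j ∈ s, (Real.sin (x j 0) ^ 2 - Y) / Real.sin (x j 0) ^ 2
      = ∏ j ∈ s, (1 - Y / Real.sin (x j 0) ^ 2) :=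
    Finset.prod_congr rfl fun j hj => by rw [sub_div, div_self (hsq le_rfl hj)]
  have hprodt : ∏ j ∈ s.erase k, Real.sin (x j t) ^ 2 / (Real.sin (x j t) ^ 2 - Y) = (P t)⁻¹ := by
    rw [hP, ← Finset.prod_inv_distrib]
    refine Finset.prod_congr rfl fun j hj => ?_
    have h1 := hsq ht.le (Finset.mem_of_mem_erase hj)
    rw [← inv_div, sub_div, div_self h1]
  have hZ0 := (realIsingZ_zero_pos E J u₀ v₀ 0).ne'
  have hZt : realIsingZ E J u₀ v₀ t 0
      = realIsingZ E J u₀ v₀ 0 0 * (corr E J u₀ v₀ * Real.sinh t + Real.cosh t) := by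
    rw [realIsingZ_eq, realIsingZDeriv_zero]
    ring
  have hden : corr E J u₀ v₀ * Real.sinh t + Real.cosh t ≠ 0 := fun h =>
    (realIsingZ_zero_pos E J u₀ v₀ t).ne' (by rw [hZt, h, mul_zero])
  rw [hdt, hprod0, hprodt, hfac le_rfl (x k t)]
  simp only [hg, hZt, ← hY]
  field_simp
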